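/- Define I : ℤ × ℤ → ℤ by I(j,k) = |j| + |k| − 2 if j·k < 0 and I(j,k) = |j| + |k| − 1 otherwise, and for x, y ∈ ℤ² set i(x,y) = I(x − y). Let V ⊆ ℤ² be a set such that i(x,y) ≤ 1 for all distinct x, y ∈ V. Then there exists a translation t ∈ ℤ² such that either V + t ⊆ V₊ or σ(V) + t ⊆ V₊, where σ(j,k) = (k,j) and V₊ = {(0,0), (1,0), (−1,0), (0,1), (0,−1), (1,−1)}. In particular, |V| ≤ 6. -/

import Mathlib

/-- The combinatorial intersection pairing coming from the Dehn-twisted arcs `v_{jk}`. -/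
def Istep : ℤ × ℤ → ℤ := fun q =>
  if q.1 * q.2 < 0 then |q.1| + |q.2| - 2 else |q.1| + |q.2| - 1

/-- The reference configuration `V₊`. -/
def Vplus : Set (ℤ × ℤ) := {(0, 0), (1, 0), (-1, 0), (0, 1), (0, -1), (1, -1)}

lemma Istep_bounds (j k : ℤ) (h : Istep (j, k) ≤ 1) :
    j ≤ 2 ∧ k ≤ 2 ∧ j + k ≤ 2 ∧ j - k ≤ 3 := by
  unfold Istep at h
  simp only at h
  split_ifs at h with hjk
  · rcases mul_neg_iff.mp hjk with ⟨h1, h2⟩ | ⟨h1, h2⟩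
    · rw [abs_of_pos h1, abs_of_neg h2] at h
      omega
    · rw [abs_of_neg h1, abs_of_pos h2] at h
      omega
  · have h1 := le_abs_self j
    have h2 := le_abs_self k
    have h3 := neg_le_abs k
    have h4 := abs_nonneg j
    have h5 := abs_nonneg k
    omega

lemma exists_min_on (V : Set (ℤ × ℤ)) (hne : V.Nonempty) (f : ℤ × ℤ → ℤ) (w : ℤ)
    (h : ∀ x ∈ V, ∀ y ∈ V, f x - f y ≤ w) :
    ∃ a, ∀ x ∈ V, a ≤ f x ∧ f x ≤ a + w := by
  obtain ⟨x0, hx0⟩ := hne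
  obtain ⟨a, ⟨y, hy, rfl⟩, ha⟩ := Int.exists_least_of_bdd (P := fun z => ∃ y ∈ V, f y = z)
    ⟨f x0 - w, by
      rintro z ⟨y, hy, rfl⟩
      have := h x0 hx0 y hy
      omega⟩ ⟨f x0, x0, hx0, rfl⟩
  refine ⟨f y, fun x hx => ⟨ha _ ⟨x, hx, rfl⟩, ?_⟩⟩
  have := h x hx y hy
  omega

lemma exists_translation (V : Set (ℤ × ℤ))
    (hV : ∀ x ∈ V, ∀ y ∈ V, x ≠ y → Istep (x - y) ≤ 1) :
    ∃ t : ℤ × ℤ, (∀ x ∈ V, x + t ∈ Vplus) ∨ (∀ x ∈ V, (x.2, x.1) + t ∈ Vplus) := by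
  rcases V.eq_empty_or_nonempty with rfl | hne
  · exact ⟨0, Or.inl (by simp)⟩
  have hb : ∀ x ∈ V, ∀ y ∈ V, x.1 - y.1 ≤ 2 ∧ x.2 - y.2 ≤ 2 ∧
      (x.1 - y.1) + (x.2 - y.2) ≤ 2 ∧ (x.1 - y.1) - (x.2 - y.2) ≤ 3 := by
    intro x hx y hy
    by_cases hxy : x = y
    · subst hxy
      omega
    · exact Istep_bounds _ _ (hV x hx y hy hxy)
  obtain ⟨a, ha⟩ := exists_min_on V hne (fun x => x.1) 2 fun x hx y hy => (hb x hx y hy).1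
  obtain ⟨b, hb'⟩ := exists_min_on V hne (fun x => x.2) 2 fun x hx y hy => (hb x hx y hy).2.1
  obtain ⟨c, hc⟩ := exists_min_on V hne (fun x => x.1 + x.2) 2 fun x hx y hy => by
    have := hb x hx y hy
    omega
  obtain ⟨d, hd⟩ := exists_min_on V hne (fun x => x.1 - x.2) 3 fun x hx y hy => by
    have := hb x hx y hy
    omega
  have key : ∀ x ∈ V, a ≤ x.1 ∧ x.1 ≤ a + 2 ∧ b ≤ x.2 ∧ x.2 ≤ b + 2 ∧ c ≤ x.1 + x.2 ∧
      x.1 + x.2 ≤ c + 2 ∧ d ≤ x.1 - x.2 ∧ x.1 - x.2 ≤ d + 3 := by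
    intro x hx
    have h1 := ha x hx
    have h2 := hb' x hx
    have h3 := hc x hx
    have h4 := hd x hx
    omega
  have mem : ∀ p q : ℤ, -1 ≤ p → p ≤ 1 → -1 ≤ q → q ≤ 1 → -1 ≤ p + q → p + q ≤ 1 →
      -1 ≤ p - q → ((p, q) : ℤ × ℤ) ∈ Vplus := by
    intro p q _ _ _ _ _ _ _
    simp only [Vplus, Set.mem_insert_iff, Set.mem_singleton_iff, Prod.mk.injEq]
    omega
  -- `(e₁, e₂)` is the chosen centre, relative to the corner `(a, b)`
  have plus : ∀ e₁ e₂ : ℤ, (∀ x ∈ V, -1 ≤ x.1 - a - e₁ ∧ x.1 - a - e₁ ≤ 1 ∧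
      -1 ≤ x.2 - b - e₂ ∧ x.2 - b - e₂ ≤ 1 ∧ -1 ≤ x.1 - a - e₁ + (x.2 - b - e₂) ∧
      x.1 - a - e₁ + (x.2 - b - e₂) ≤ 1 ∧ -1 ≤ x.1 - a - e₁ - (x.2 - b - e₂)) →
      ∃ t : ℤ × ℤ, (∀ x ∈ V, x + t ∈ Vplus) ∨ (∀ x ∈ V, (x.2, x.1) + t ∈ Vplus) := by
    intro e₁ e₂ h
    refine ⟨(-a - e₁, -b - e₂), Or.inl fun x hx => ?_⟩
    have := h x hx
    apply mem <;> simp only <;> omega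
  have minus : ∀ e₁ e₂ : ℤ, (∀ x ∈ V, -1 ≤ x.1 - a - e₁ ∧ x.1 - a - e₁ ≤ 1 ∧
      -1 ≤ x.2 - b - e₂ ∧ x.2 - b - e₂ ≤ 1 ∧ -1 ≤ x.1 - a - e₁ + (x.2 - b - e₂) ∧
      x.1 - a - e₁ + (x.2 - b - e₂) ≤ 1 ∧ x.1 - a - e₁ - (x.2 - b - e₂) ≤ 1) →
      ∃ t : ℤ × ℤ, (∀ x ∈ V, x + t ∈ Vplus) ∨ (∀ x ∈ V, (x.2, x.1) + t ∈ Vplus) := by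
    intro e₁ e₂ h
    refine ⟨(-b - e₂, -a - e₁), Or.inr fun x hx => ?_⟩
    have := h x hx
    apply mem <;> simp only <;> omega
  have hcs : c ≤ a + b ∨ c = a + b + 1 ∨ a + b + 2 ≤ c := by omega
  have hds : a - b - 1 ≤ d ∨ d ≤ a - b - 2 := by omega
  rcases hcs with h1 | h1 | h1 <;> rcases hds with h2 | h2
  · exact minus 1 0 fun x hx => by have := key x hx; omega
  · exact plus 0 1 fun x hx => by have := key x hx; omega
  · exact plus 1 1 fun x hx => by have := key x hx; omega
  · exact minus 1 1 fun x hx => by have := key x hx; omega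
  · exact minus 2 1 fun x hx => by have := key x hx; omega
  · exact plus 1 2 fun x hx => by have := key x hx; omega

lemma Vplus_encard_le : Vplus.encard ≤ 6 := by
  have : Vplus = ((({(0, 0), (1, 0), (-1, 0), (0, 1), (0, -1), (1, -1)} :
      Finset (ℤ × ℤ)) : Set (ℤ × ℤ))) := by
    simp [Vplus]
  rw [this, Set.encard_coe_eq_coe_finsetCard]
  exact_mod_cast Finset.card_le_six

/-- Any subset of `ℤ²` on which the pairing `i(x,y) = Istep (x - y)` is at most `1`
is, up to translation and possibly the reflection `(j,k) ↦ (k,j)`, contained in `V₊`;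
in particular it has at most 6 elements. -/
theorem zsq_configurations_contained_in_Vplus (V : Set (ℤ × ℤ))
    (hV : ∀ x ∈ V, ∀ y ∈ V, x ≠ y → Istep (x - y) ≤ 1) :
    (∃ t : ℤ × ℤ,
      ((fun x => x + t) '' V ⊆ Vplus) ∨
      ((fun x => x + t) '' ((fun q : ℤ × ℤ => (q.2, q.1)) '' V) ⊆ Vplus)) ∧
    V.encard ≤ 6 := by
  obtain ⟨t, ht⟩ := exists_translation V hV
  refine ⟨⟨t, ?_⟩, ?_⟩
  · rcases ht with ht | ht
    · left
      rintro _ ⟨x, hx, rfl⟩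
      exact ht x hx
    · right
      rintro _ ⟨_, ⟨x, hx, rfl⟩, rfl⟩
      exact ht x hx
  · refine le_trans ?_ Vplus_encard_le
    rcases ht with ht | ht
    · exact Set.encard_le_encard_of_injOn (f := fun x => x + t) ht
        (fun x _ y _ h => add_right_cancel h)
    · refine Set.encard_le_encard_of_injOn (f := fun x => (x.2, x.1) + t) ht
        (fun x _ y _ h => ?_)
      have h' := Prod.mk.inj (add_right_cancel h)
      exact Prod.ext h'.2 h'.1
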